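/- arXiv:2105.10043 — 6 statements merged into one kernel-verified Lean document; each statement's English description precedes it below -/
import Mathlib

section
/- Let x⁰ be a weighted graph on a finite set V satisfying the subtour-elimination LP constraints: Σ_{u ∈ V} x⁰ u v = 2 for every v ∈ V, and x⁰(δ(S)) ≥ 2 for every S with ∅ ≠ S ⊊ V. Suppose u₀, v₀ ∈ V are distinct with x⁰ u₀ v₀ = 1, and let x be equal to x⁰ except that x u₀ v₀ = x v₀ u₀ = 0. Then x lies in the spanning tree polytope of the complete graph on V: x(E(V)) = |V| − 1, and x(E(S)) ≤ |S| − 1 for every nonempty S ⊆ V. -/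
open scoped BigOperators

/-- The cut value `x(δ(S)) = ∑_{u ∈ S, v ∉ S} x u v`. -/
noncomputable def cutVal {V : Type*} [Fintype V] [DecidableEq V] (x : V → V → ℝ) (S : Finset V) : ℝ :=
  ∑ u ∈ S, ∑ v ∈ Sᶜ, x u v

/-- `x(E(S)) = (1/2) ∑_{u ∈ S, v ∈ S} x u v`, counting each unordered pair inside `S` once. -/
noncomputable def insideVal {V : Type*} (x : V → V → ℝ) (S : Finset V) : ℝ :=
  (1 / 2) * ∑ u ∈ S, ∑ v ∈ S, x u v

/-!
The weight entering `S` from outside is the weight leaving `Sᶜ`, so summing the in-degrees over `S`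
gives `2 x⁰(E(S)) = 2 |S| - x⁰(δ(Sᶜ))`. Hence `x⁰(E(V)) = |V|`, and the cut constraint for `Sᶜ` gives
`x⁰(E(S)) ≤ |S| - 1` for every proper nonempty `S`. Deleting an edge of weight one lowers the first
value by exactly one and cannot raise any of the others.
-/

section

variable {V : Type*} [DecidableEq V]

theorem two_mul_insideVal_add_cutVal_compl [Fintype V] (x : V → V → ℝ) (S : Finset V) :
    2 * insideVal x S + cutVal x Sᶜ = ∑ v ∈ S, ∑ u, x u v := by
  calc
    2 * insideVal x S + cutVal x Sᶜ
        = ∑ u ∈ S, ∑ v ∈ S, x u v + ∑ u ∈ Sᶜ, ∑ v ∈ S, x u v := by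
      rw [insideVal, cutVal, compl_compl]
      ring
    _ = ∑ u, ∑ v ∈ S, x u v := Finset.sum_add_sum_compl S _
    _ = ∑ v ∈ S, ∑ u, x u v := Finset.sum_comm

theorem insideVal_eq_of_inDegree_eq [Fintype V] {x : V → V → ℝ} {S : Finset V} {d : ℝ}
    (hdeg : ∀ v ∈ S, ∑ u, x u v = d) :
    insideVal x S = (d * S.card - cutVal x Sᶜ) / 2 := by
  have hsum : ∑ v ∈ S, ∑ u, x u v = d * S.card := by
    rw [Finset.sum_congr rfl hdeg, Finset.sum_const, nsmul_eq_mul, mul_comm]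
  linarith [two_mul_insideVal_add_cutVal_compl x S]

/-- The weighted graph `x` with the edge `{a, b}` deleted: both ordered pairs `(a, b)` and `(b, a)`
get weight zero, because weights live on ordered pairs. -/
def deleteEdge (x : V → V → ℝ) (a b : V) : V → V → ℝ :=
  fun u v => if (u = a ∧ v = b) ∨ (u = b ∧ v = a) then 0 else x u v

theorem insideVal_deleteEdge (x : V → V → ℝ) {a b : V} (hab : a ≠ b) (S : Finset V) :
    insideVal (deleteEdge x a b) S =
      insideVal x S - if a ∈ S ∧ b ∈ S then (x a b + x b a) / 2 else 0 := by
  have hdelete : ∀ u v, deleteEdge x a b u v = x u v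
      - (if u = a then if v = b then x a b else 0 else 0)
      - (if u = b then if v = a then x b a else 0 else 0) := by
    intro u v
    grind [deleteEdge]
  simp only [insideVal, hdelete, Finset.sum_sub_distrib, Finset.sum_ite_irrel,
    Finset.sum_ite_eq', Finset.sum_const_zero]
  split_ifs <;> grind

end

theorem stmt_0_general {V : Type*} [Fintype V] [DecidableEq V]
    (x0 x : V → V → ℝ)
    (hdeg : ∀ v, ∑ u, x0 u v = 2)
    (hcut : ∀ S : Finset V, S.Nonempty → S ≠ Finset.univ → 2 ≤ cutVal x0 S)
    (u0 v0 : V) (huv : u0 ≠ v0) (he0 : x0 u0 v0 + x0 v0 u0 = 2)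
    (hx : ∀ u v, x u v =
      if (u = u0 ∧ v = v0) ∨ (u = v0 ∧ v = u0) then 0 else x0 u v) :
    insideVal x (Finset.univ : Finset V) = (Fintype.card V : ℝ) - 1 ∧
      ∀ S : Finset V, S.Nonempty → insideVal x S ≤ (S.card : ℝ) - 1 := by
  obtain rfl : x = deleteEdge x0 u0 v0 := funext₂ hx
  have hinside (S : Finset V) : insideVal x0 S = (2 * S.card - cutVal x0 Sᶜ) / 2 :=
    insideVal_eq_of_inDegree_eq fun v _ => hdeg v
  have hdelete (S : Finset V) : insideVal (deleteEdge x0 u0 v0) S =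
      insideVal x0 S - if u0 ∈ S ∧ v0 ∈ S then 1 else 0 := by
    rw [insideVal_deleteEdge x0 huv, he0, div_self two_ne_zero]
  have huniv : insideVal (deleteEdge x0 u0 v0) Finset.univ = (Fintype.card V : ℝ) - 1 := by
    simp [hdelete, hinside, cutVal]
  refine ⟨huniv, fun S hS => ?_⟩
  obtain rfl | hSuniv := eq_or_ne S Finset.univ
  · exact huniv.le
  · have hcutS : 2 ≤ cutVal x0 Sᶜ :=
      hcut Sᶜ (by simpa [Finset.nonempty_iff_ne_empty] using hSuniv) (by simpa using hS.ne_empty)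
    have hdrop : insideVal (deleteEdge x0 u0 v0) S ≤ insideVal x0 S := by
      rw [hdelete]
      split_ifs <;> norm_num
    linarith [hinside S]

/-- If `x⁰` satisfies the subtour-elimination LP constraints, `x⁰ u₀ v₀ = 1` for distinct
`u₀, v₀`, and `x` is `x⁰` with the edge `{u₀, v₀}` zeroed out, then `x` lies in the
spanning tree polytope of the complete graph on `V`. -/
theorem stmt_0 {V : Type*} [Fintype V] [DecidableEq V]
    (x0 x : V → V → ℝ)
    (hsymm : ∀ u v, x0 u v = x0 v u)
    (hnonneg : ∀ u v, 0 ≤ x0 u v)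
    (hdiag : ∀ v, x0 v v = 0)
    (hdeg : ∀ v, ∑ u, x0 u v = 2)
    (hcut : ∀ S : Finset V, S.Nonempty → S ≠ Finset.univ → 2 ≤ cutVal x0 S)
    (u0 v0 : V) (huv : u0 ≠ v0) (he0 : x0 u0 v0 = 1)
    (hx : ∀ u v, x u v =
      if (u = u0 ∧ v = v0) ∨ (u = v0 ∧ v = u0) then 0 else x0 u v) :
    insideVal x (Finset.univ : Finset V) = (Fintype.card V : ℝ) - 1 ∧
      ∀ S : Finset V, S.Nonempty → insideVal x S ≤ (S.card : ℝ) - 1 := by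
  exact stmt_0_general x0 x hdeg hcut u0 v0 huv (by linarith [hsymm u0 v0]) hx
end

section
/- Let x be a fractionally 2-edge-connected weighted graph on a finite set V, and let A, B ⊊ V be two crossing sets each satisfying x(δ(A)) ≤ 2 + ε and x(δ(B)) ≤ 2 + ε for some ε ≥ 0. Then all four corner quantities x(E(A ∩ B, A ∖ B)), x(E(A ∩ B, B ∖ A)), x(E(V ∖ (A ∪ B), A ∖ B)) and x(E(V ∖ (A ∪ B), B ∖ A)) are at least 1 − ε/2. -/
open scoped BigOperators

/-- For disjoint `A, B ⊆ V`, `x(E(A,B)) = ∑_{u ∈ A, v ∈ B} x u v`. -/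
noncomputable def btwVal {V : Type*} (x : V → V → ℝ) (A B : Finset V) : ℝ :=
  ∑ u ∈ A, ∑ v ∈ B, x u v

/-- Two sets `A, B ⊆ V` cross if `A ∩ B`, `A \ B`, `B \ A` and `V \ (A ∪ B)` are all nonempty. -/
def CutCrosses {V : Type*} [Fintype V] [DecidableEq V] (A B : Finset V) : Prop :=
  (A ∩ B).Nonempty ∧ (A \ B).Nonempty ∧ (B \ A).Nonempty ∧ ((A ∪ B)ᶜ).Nonempty

/-!
If `A` is split into two nonempty parts `S` and `T`, then
`x(δ(S)) + x(δ(T)) = x(δ(A)) + 2 x(E(S, T))`: the left-hand side is at least twice the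
connectivity, so `x(E(S, T))` is large whenever `x(δ(A))` is small. Each corner quantity arises
from such a split of `A`, `B`, `Aᶜ` or `Bᶜ`, and complementary sets have the same cut value.
-/

section BtwVal

variable {V : Type*} {x : V → V → ℝ}

theorem btwVal_comm (hsymm : ∀ u v, x u v = x v u) (S T : Finset V) :
    btwVal x S T = btwVal x T S :=
  Finset.sum_comm.trans <|
    Finset.sum_congr rfl fun v _ => Finset.sum_congr rfl fun u _ => hsymm u v

variable [DecidableEq V]

theorem btwVal_union_left {S T : Finset V} (hST : Disjoint S T) (U : Finset V) :
    btwVal x (S ∪ T) U = btwVal x S U + btwVal x T U :=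
  Finset.sum_union hST

theorem btwVal_union_right (S : Finset V) {T U : Finset V} (hTU : Disjoint T U) :
    btwVal x S (T ∪ U) = btwVal x S T + btwVal x S U := by
  simp only [btwVal, Finset.sum_union hTU, Finset.sum_add_distrib]

end BtwVal

section CutVal

variable {V : Type*} [Fintype V] [DecidableEq V] {x : V → V → ℝ}

theorem cutVal_eq_btwVal_compl (S : Finset V) : cutVal x S = btwVal x S Sᶜ := rfl

theorem cutVal_compl (hsymm : ∀ u v, x u v = x v u) (S : Finset V) :
    cutVal x Sᶜ = cutVal x S := by
  rw [cutVal_eq_btwVal_compl, cutVal_eq_btwVal_compl, compl_compl, btwVal_comm hsymm]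

theorem cutVal_eq_btwVal_add_of_disjoint {S T : Finset V} (hST : Disjoint S T) :
    cutVal x S = btwVal x S T + btwVal x S (S ∪ T)ᶜ := by
  have hcompl : Sᶜ = T ∪ (S ∪ T)ᶜ := by
    rw [Finset.compl_union, Finset.union_inter_distrib_left, Finset.union_compl,
      Finset.inter_univ, Finset.union_eq_right.mpr hST.le_compl_left]
  have hdisj : Disjoint T (S ∪ T)ᶜ :=
    disjoint_compl_right.mono_left Finset.subset_union_right
  rw [cutVal_eq_btwVal_compl, hcompl, btwVal_union_right S hdisj]

theorem cutVal_add_cutVal_of_disjoint (hsymm : ∀ u v, x u v = x v u) {S T : Finset V}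
    (hST : Disjoint S T) :
    cutVal x S + cutVal x T = cutVal x (S ∪ T) + 2 * btwVal x S T := by
  have hS := cutVal_eq_btwVal_add_of_disjoint (x := x) hST
  have hT : cutVal x T = btwVal x S T + btwVal x T (S ∪ T)ᶜ := by
    rw [cutVal_eq_btwVal_add_of_disjoint hST.symm, btwVal_comm hsymm T S,
      Finset.union_comm T S]
  have hunion : cutVal x (S ∪ T) = btwVal x S (S ∪ T)ᶜ + btwVal x T (S ∪ T)ᶜ :=
    btwVal_union_left hST _
  linarith

theorem half_sub_le_btwVal_inter_sdiff (hsymm : ∀ u v, x u v = x v u) {c ε : ℝ}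
    (hconn : ∀ S : Finset V, S.Nonempty → S ≠ Finset.univ → c ≤ cutVal x S)
    {A B : Finset V} (hinter : (A ∩ B).Nonempty) (hsdiff : (A \ B).Nonempty)
    (hcut : cutVal x A ≤ c + ε) :
    (c - ε) / 2 ≤ btwVal x (A ∩ B) (A \ B) := by
  have hdisj : Disjoint (A ∩ B) (A \ B) := disjoint_inf_sdiff
  have hinter_cut : c ≤ cutVal x (A ∩ B) :=
    hconn _ hinter fun h => hsdiff.ne_empty <| by
      rwa [h, ← Finset.top_eq_univ, top_disjoint] at hdisj
  have hsdiff_cut : c ≤ cutVal x (A \ B) :=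
    hconn _ hsdiff fun h => hinter.ne_empty <| by
      rwa [h, ← Finset.top_eq_univ, disjoint_top] at hdisj
  have hsum : cutVal x (A ∩ B) + cutVal x (A \ B) =
      cutVal x A + 2 * btwVal x (A ∩ B) (A \ B) := by
    rw [cutVal_add_cutVal_of_disjoint hsymm hdisj, Finset.union_comm, Finset.sdiff_union_inter]
  linarith

end CutVal

theorem stmt_3_general {V : Type*} [Fintype V] [DecidableEq V] {x : V → V → ℝ}
    (hsymm : ∀ u v, x u v = x v u) {c ε : ℝ}
    (hconn : ∀ S : Finset V, S.Nonempty → S ≠ Finset.univ → c ≤ cutVal x S)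
    {A B : Finset V} (hcross : CutCrosses A B)
    (hcutA : cutVal x A ≤ c + ε) (hcutB : cutVal x B ≤ c + ε) :
    (c - ε) / 2 ≤ btwVal x (A ∩ B) (A \ B) ∧
    (c - ε) / 2 ≤ btwVal x (A ∩ B) (B \ A) ∧
    (c - ε) / 2 ≤ btwVal x ((A ∪ B)ᶜ) (A \ B) ∧
    (c - ε) / 2 ≤ btwVal x ((A ∪ B)ᶜ) (B \ A) := by
  obtain ⟨hinter, hAB, hBA, hcompl⟩ := hcross
  have hcutA_compl : cutVal x Aᶜ ≤ c + ε := (cutVal_compl hsymm A).trans_le hcutA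
  have hcutB_compl : cutVal x Bᶜ ≤ c + ε := (cutVal_compl hsymm B).trans_le hcutB
  refine ⟨half_sub_le_btwVal_inter_sdiff hsymm hconn hinter hAB hcutA, ?_, ?_, ?_⟩
  · rw [Finset.inter_comm] at hinter ⊢
    exact half_sub_le_btwVal_inter_sdiff hsymm hconn hinter hBA hcutB
  · rw [Finset.union_comm, Finset.compl_union] at hcompl ⊢
    rw [← compl_sdiff_compl] at hAB ⊢
    exact half_sub_le_btwVal_inter_sdiff hsymm hconn hcompl hAB hcutB_compl
  · rw [Finset.compl_union] at hcompl ⊢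
    rw [← compl_sdiff_compl] at hBA ⊢
    exact half_sub_le_btwVal_inter_sdiff hsymm hconn hcompl hBA hcutA_compl

/-- If `A, B` are two crossing `ε`-near minimum cuts of a fractionally 2-edge-connected
weighted graph, then all four corner quantities are at least `1 − ε/2`. -/
theorem stmt_3 {V : Type*} [Fintype V] [DecidableEq V]
    (x : V → V → ℝ)
    (hsymm : ∀ u v, x u v = x v u)
    (hnonneg : ∀ u v, 0 ≤ x u v)
    (hdiag : ∀ v, x v v = 0)
    (h2ec : ∀ S : Finset V, S.Nonempty → S ≠ Finset.univ → 2 ≤ cutVal x S)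
    (A B : Finset V) (hA : A ≠ Finset.univ) (hB : B ≠ Finset.univ)
    (hcross : CutCrosses A B)
    (ε : ℝ) (hε : 0 ≤ ε)
    (hcutA : cutVal x A ≤ 2 + ε) (hcutB : cutVal x B ≤ 2 + ε) :
    1 - ε / 2 ≤ btwVal x (A ∩ B) (A \ B) ∧
    1 - ε / 2 ≤ btwVal x (A ∩ B) (B \ A) ∧
    1 - ε / 2 ≤ btwVal x ((A ∪ B)ᶜ) (A \ B) ∧
    1 - ε / 2 ≤ btwVal x ((A ∪ B)ᶜ) (B \ A) := by
  simpa only [sub_div, div_self (two_ne_zero' ℝ)] using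
    stmt_3_general hsymm h2ec hcross hcutA hcutB
end

section
/- Let G = (V, E) be a finite simple graph with edge weights x : E → ℝ≥0 and let μ be a distribution over spanning trees of G with marginals x. Let S ⊆ V be a nonempty set such that every vertex v ∈ S satisfies x(δ({v})) = 2, and suppose x(δ(S)) ≤ 2 + ε for some ε ≥ 0. Then the probability under μ that the sampled spanning tree T satisfies |T ∩ E(S)| = |S| − 1 (i.e., T restricted to S is a spanning tree of S) is at least 1 − ε/2. -/
open scoped BigOperators Classical

/-- The edges of `E` with exactly one endpoint in `S` (the cut `δ(S)`). -/
noncomputable def cutEdges {V : Type*} (E : Finset (Sym2 V)) (S : Finset V) :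
    Finset (Sym2 V) :=
  E.filter (fun e => ∃ a b : V, e = s(a, b) ∧ a ∈ S ∧ b ∉ S)

/-- The edges of `E` with both endpoints in `S` (the set `E(S)`). -/
noncomputable def insideEdges {V : Type*} (E : Finset (Sym2 V)) (S : Finset V) :
    Finset (Sym2 V) :=
  E.filter (fun e => ∀ a ∈ e, a ∈ S)

/-- `T` is a spanning tree of the vertex set `V`: the graph on `V` with edge set `T`
is connected and acyclic. -/
def IsSpanningTree {V : Type*} (T : Finset (Sym2 V)) : Prop :=
  (SimpleGraph.fromEdgeSet (T : Set (Sym2 V))).Connected ∧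
    (SimpleGraph.fromEdgeSet (T : Set (Sym2 V))).IsAcyclic

/-!
A forest has fewer than `|S|` edges inside `S`, so `|T ∩ E(S)| ≤ |S| - 1` for every sampled `T`.
On the other hand, summing the degrees over `S` gives `2 x(E(S)) + x(δ(S)) ≥ 2 |S|`, so the
expectation `x(E(S))` of `|T ∩ E(S)|` is at least `|S| - x(δ(S)) / 2`. A random natural number that
is at most `k` and has mean `m` equals `k` with probability at least `m - (k - 1)`; take
`k = |S| - 1`.
-/

section Forest

theorem card_edgeFinset_lt_card_of_isAcyclic {V : Type*} [Fintype V] [Nonempty V]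
    {G : SimpleGraph V} [Fintype G.edgeSet] (hG : G.IsAcyclic) :
    G.edgeFinset.card < Fintype.card V := by
  obtain ⟨F, hGF, -, hF⟩ :=
    SimpleGraph.connected_top.exists_isTree_le_of_le_of_isAcyclic le_top hG
  calc G.edgeFinset.card ≤ F.edgeFinset.card :=
        Finset.card_le_card (SimpleGraph.edgeFinset_mono hGF)
    _ < Fintype.card V := by rw [← hF.card_edgeFinset]; exact Nat.lt_succ_self _

theorem card_lt_card_of_isAcyclic_fromEdgeSet {V : Type*} {F : Finset (Sym2 V)} {S : Finset V}
    (hloop : ∀ e ∈ F, ¬ e.IsDiag)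
    (hF : (SimpleGraph.fromEdgeSet (F : Set (Sym2 V))).IsAcyclic)
    (hFS : F ⊆ S.sym2) (hS : S.Nonempty) : F.card < S.card := by
  have : Nonempty (S : Set V) := hS.to_subtype
  set G := (SimpleGraph.fromEdgeSet (F : Set (Sym2 V))).induce (S : Set V)
  have hsub : F ⊆ G.edgeFinset.image (Sym2.map Subtype.val) := by
    intro e he
    induction e with | h a b
    obtain ⟨ha, hb⟩ := Finset.mk_mem_sym2_iff.1 (hFS he)
    refine Finset.mem_image.2 ⟨s(⟨a, ha⟩, ⟨b, hb⟩), ?_, rfl⟩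
    simpa [G, he] using hloop _ he
  calc F.card ≤ G.edgeFinset.card := (Finset.card_le_card hsub).trans Finset.card_image_le
    _ < Fintype.card (S : Set V) := card_edgeFinset_lt_card_of_isAcyclic (hF.induce _)
    _ = S.card := Fintype.card_coe S

end Forest

section Handshake

variable {V : Type*} {E : Finset (Sym2 V)} {S : Finset V}

theorem mk_mem_insideEdges {a b : V} :
    s(a, b) ∈ insideEdges E S ↔ s(a, b) ∈ E ∧ a ∈ S ∧ b ∈ S := by
  simp [insideEdges]

theorem mk_mem_cutEdges {a b : V} :
    s(a, b) ∈ cutEdges E S ↔ s(a, b) ∈ E ∧ (a ∈ S ∧ b ∉ S ∨ b ∈ S ∧ a ∉ S) := by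
  simp only [cutEdges, Finset.mem_filter, Sym2.eq_iff]
  grind

theorem insideEdges_subset : insideEdges E S ⊆ E :=
  Finset.filter_subset _ _

theorem cutEdges_subset : cutEdges E S ⊆ E :=
  Finset.filter_subset _ _

theorem insideEdges_subset_sym2 : insideEdges E S ⊆ S.sym2 := fun _ he =>
  Finset.mem_sym2_iff.2 (Finset.mem_filter.1 he).2

theorem mem_cutEdges_singleton {e : Sym2 V} (he : ¬ e.IsDiag) {v : V} :
    e ∈ cutEdges E {v} ↔ e ∈ E ∧ v ∈ e := by
  induction e with | h a b
  rw [Sym2.mk_isDiag_iff] at he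
  simp only [mk_mem_cutEdges, Finset.mem_singleton, Sym2.mem_iff]
  grind

theorem card_filter_mem_eq_insideEdges_add_cutEdges {e : Sym2 V} (he : e ∈ E)
    (hdiag : ¬ e.IsDiag) :
    (S.filter (· ∈ e)).card =
      2 * (if e ∈ insideEdges E S then 1 else 0) + if e ∈ cutEdges E S then 1 else 0 := by
  induction e with | h a b
  rw [Sym2.mk_isDiag_iff] at hdiag
  have hfilter : S.filter (· ∈ s(a, b)) = ({a, b} : Finset V).filter (· ∈ S) := by
    ext v
    simp only [Finset.mem_filter, Sym2.mem_iff, Finset.mem_insert, Finset.mem_singleton, and_comm]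
  rw [hfilter, Finset.card_filter, Finset.sum_pair hdiag]
  simp only [mk_mem_insideEdges, mk_mem_cutEdges, he, true_and]
  by_cases ha : a ∈ S <;> by_cases hb : b ∈ S <;> simp [ha, hb]

theorem sum_sum_cutEdges_singleton {M : Type*} [AddCommMonoid M]
    (hE : ∀ e ∈ E, ¬ e.IsDiag) (x : Sym2 V → M) :
    ∑ v ∈ S, ∑ e ∈ cutEdges E {v}, x e =
      2 • ∑ e ∈ insideEdges E S, x e + ∑ e ∈ cutEdges E S, x e := by
  calc ∑ v ∈ S, ∑ e ∈ cutEdges E {v}, x e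
      = ∑ e ∈ E, ∑ v ∈ S with v ∈ e, x e := by
        refine Finset.sum_comm' fun v e => ?_
        have hcut := fun he => mem_cutEdges_singleton (E := E) (hE e he) (v := v)
        have hmem : e ∈ cutEdges E {v} → e ∈ E := (cutEdges_subset ·)
        grind
    _ = ∑ e ∈ E, (2 * (if e ∈ insideEdges E S then 1 else 0) +
          if e ∈ cutEdges E S then 1 else 0) • x e := by
        refine Finset.sum_congr rfl fun e he => ?_
        rw [Finset.sum_const, card_filter_mem_eq_insideEdges_add_cutEdges he (hE e he)]
    _ = 2 • ∑ e ∈ insideEdges E S, x e + ∑ e ∈ cutEdges E S, x e := by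
        simp only [add_smul, mul_smul, ite_smul, one_smul, zero_smul, Finset.sum_add_distrib,
          ← Finset.smul_sum, Finset.sum_ite_mem, Finset.inter_eq_right.2 insideEdges_subset,
          Finset.inter_eq_right.2 cutEdges_subset]

end Handshake

section Expectation

theorem sum_mul_card_inter {α R : Type*} [DecidableEq α] [NonAssocSemiring R]
    (𝓕 : Finset (Finset α)) (μ : Finset α → R) (A : Finset α) :
    ∑ T ∈ 𝓕, μ T * ((T ∩ A).card : R) = ∑ e ∈ A, ∑ T ∈ 𝓕 with e ∈ T, μ T := by
  calc ∑ T ∈ 𝓕, μ T * ((T ∩ A).card : R) = ∑ T ∈ 𝓕, ∑ _e ∈ T ∩ A, μ T := by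
        simp only [Finset.sum_const, nsmul_eq_mul']
    _ = ∑ e ∈ A, ∑ T ∈ 𝓕 with e ∈ T, μ T :=
        Finset.sum_comm' fun T e => by grind

theorem sum_mul_natCast_le_add_sum_filter_eq {ι R : Type*} [CommRing R] [PartialOrder R]
    [IsOrderedRing R] {s : Finset ι} {μ : ι → R} {f : ι → ℕ} {k : ℕ}
    (hμ : ∀ i ∈ s, 0 ≤ μ i) (hf : ∀ i ∈ s, μ i ≠ 0 → f i ≤ k) :
    ∑ i ∈ s, μ i * f i ≤ (k - 1) * ∑ i ∈ s, μ i + ∑ i ∈ s with f i = k, μ i := by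
  rw [Finset.mul_sum, Finset.sum_filter, ← Finset.sum_add_distrib]
  refine Finset.sum_le_sum fun i hi => ?_
  by_cases hμi : μ i = 0
  · simp [hμi]
  split_ifs with hfi
  · exact le_of_eq (by rw [hfi]; ring)
  · have hlt : f i + 1 ≤ k := (hf i hi hμi).lt_of_ne hfi
    have hle : (f i : R) ≤ k - 1 := le_sub_iff_add_le.2 (mod_cast Nat.mono_cast hlt)
    rw [add_zero, mul_comm]
    exact mul_le_mul_of_nonneg_right hle (hμ i hi)

end Expectation

theorem stmt_5_general {V : Type*} [DecidableEq V]
    {E : Finset (Sym2 V)} (hE : ∀ e ∈ E, ¬ e.IsDiag) {x : Sym2 V → ℝ}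
    {𝓕 : Finset (Finset (Sym2 V))} {μ : Finset (Sym2 V) → ℝ} (hμ0 : ∀ T ∈ 𝓕, 0 ≤ μ T)
    (hforest : ∀ T ∈ 𝓕, μ T ≠ 0 → (SimpleGraph.fromEdgeSet (T : Set (Sym2 V))).IsAcyclic)
    (hsum : ∑ T ∈ 𝓕, μ T = 1)
    (hmarg : ∀ e ∈ E, ∑ T ∈ 𝓕 with e ∈ T, μ T = x e)
    {S : Finset V} (hS : S.Nonempty) (hdeg : ∀ v ∈ S, 2 ≤ ∑ e ∈ cutEdges E {v}, x e) :
    2 - (∑ e ∈ cutEdges E S, x e) / 2 ≤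
      ∑ T ∈ 𝓕 with (T ∩ insideEdges E S).card = S.card - 1, μ T := by
  have hcard : ∀ T ∈ 𝓕, μ T ≠ 0 → (T ∩ insideEdges E S).card ≤ S.card - 1 := fun T hT hμT =>
    Nat.le_sub_one_of_lt <| card_lt_card_of_isAcyclic_fromEdgeSet
      (fun e he => hE e (insideEdges_subset (Finset.mem_inter.1 he).2))
      ((hforest T hT hμT).anti (SimpleGraph.fromEdgeSet_mono (mod_cast Finset.inter_subset_left)))
      (Finset.inter_subset_right.trans insideEdges_subset_sym2) hS
  have hmean : ∑ T ∈ 𝓕, μ T * ((T ∩ insideEdges E S).card : ℝ) = ∑ e ∈ insideEdges E S, x e :=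
    (sum_mul_card_inter 𝓕 μ _).trans
      (Finset.sum_congr rfl fun e he => hmarg e (insideEdges_subset he))
  have hdegSum : (S.card : ℝ) * 2 ≤
      2 * ∑ e ∈ insideEdges E S, x e + ∑ e ∈ cutEdges E S, x e := by
    simpa only [sum_sum_cutEdges_singleton hE, nsmul_eq_mul, Nat.cast_ofNat] using
      S.card_nsmul_le_sum _ 2 hdeg
  have hbound := sum_mul_natCast_le_add_sum_filter_eq hμ0 hcard
  rw [hmean, hsum, Nat.cast_pred hS.card_pos] at hbound
  linarith

/-- If `μ` is a distribution over spanning trees of `G = (V, E)` with marginals `x`,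
`S` is nonempty, every vertex of `S` has `x(δ(v)) = 2`, and `x(δ(S)) ≤ 2 + ε`, then
with probability at least `1 − ε/2` the sampled tree `T` satisfies
`|T ∩ E(S)| = |S| − 1`, i.e. `T` restricted to `S` is a spanning tree of `S`. -/
theorem stmt_5 {V : Type*} [Fintype V] [DecidableEq V]
    (E : Finset (Sym2 V)) (hE : ∀ e ∈ E, ¬ e.IsDiag)
    (x : Sym2 V → ℝ) (hx : ∀ e, 0 ≤ x e)
    (μ : Finset (Sym2 V) → ℝ)
    (hμ0 : ∀ T, 0 ≤ μ T)
    (hsupp : ∀ T, μ T ≠ 0 → T ⊆ E ∧ IsSpanningTree T)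
    (hsum : ∑ T : Finset (Sym2 V), μ T = 1)
    (hmarg : ∀ e ∈ E, ∑ T ∈ Finset.univ.filter (fun T => e ∈ T), μ T = x e)
    (S : Finset V) (hS : S.Nonempty)
    (hdeg : ∀ v ∈ S, ∑ e ∈ cutEdges E {v}, x e = 2)
    (ε : ℝ) (hε : 0 ≤ ε)
    (hcut : ∑ e ∈ cutEdges E S, x e ≤ 2 + ε) :
    1 - ε / 2 ≤
      ∑ T ∈ Finset.univ.filter
        (fun T => (T ∩ insideEdges E S).card = S.card - 1), μ T := by
  have hgeneral := stmt_5_general hE (𝓕 := Finset.univ) (fun T _ => hμ0 T)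
    (fun T _ hT => (hsupp T hT).2.2) hsum hmarg hS fun v hv => (hdeg v hv).ge
  linarith
end

section
/- Let x be a fractionally 2-edge-connected weighted graph on a finite set V and let η > 0. If C₁, …, C_k are η-near min cuts of x forming a k-cycle, then k ≥ 2/η. -/
open scoped BigOperators

/-! Put `I i = (C i ∩ C (i + 1)) \ C (i - 1)` and `U = ⋃ C i`. The heart of the proof is
`∑ x(δ(I i)) + x(δ(U)) ≤ ∑ x(δ(C i))`, which is checked one pair of vertices at a time. Only `C i`
and `C (i + 1)` contain a vertex of `I i`. So if two vertices lie in different sets `I i` and `I j`,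
which are two of the cuts on the left separating them, then they are also separated by at least two
of the cuts `C l`, because distinct two-element index sets differ in at least two places. The
`k + 1` cuts on the left have value at least `2` and those on the right less than `2 + η`, whence
`2 (k + 1) ≤ k (2 + η)`. -/

section CyclicIndices

open Finset

variable {ι : Type*} [AddGroupWithOne ι]

/-- A set of cyclic indices, with successor `i ↦ i + 1`, any two of which are equal or neighbours.
The sets of a `k`-cycle that contain a given vertex have such indices. -/
def PairwiseAdjacent (T : Finset ι) : Prop :=
  ∀ i ∈ T, ∀ j ∈ T, j = i - 1 ∨ j = i ∨ j = i + 1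

variable [DecidableEq ι] {i j : ι} {S T : Finset ι}

/-- The first elements of the maximal cyclic intervals of `T` that have at least two elements.
If `T` is the whole cycle, there are none. -/
def runStarts (T : Finset ι) : Finset ι :=
  {i ∈ T | i + 1 ∈ T ∧ i - 1 ∉ T}

theorem mem_runStarts : i ∈ runStarts T ↔ i ∈ T ∧ i + 1 ∈ T ∧ i - 1 ∉ T :=
  mem_filter

theorem runStarts_empty : runStarts (∅ : Finset ι) = ∅ :=
  filter_empty _

theorem add_one_notMem_runStarts (hi : i ∈ T) : i + 1 ∉ runStarts T := by
  simp [mem_runStarts, hi]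

theorem card_runStarts_lt (hT : T.Nonempty) : #(runStarts T) < #T := by
  refine card_lt_card ((filter_subset _ T).ssubset_of_ne fun (heq : runStarts T = T) => ?_)
  obtain ⟨i, hi⟩ := hT
  have hsucc : i + 1 ∈ T := (mem_runStarts.1 (heq.symm ▸ hi)).2.1
  exact add_one_notMem_runStarts hi (heq.symm ▸ hsucc)

namespace PairwiseAdjacent

theorem eq_pair (hT : PairwiseAdjacent T) (hi : i ∈ runStarts T) : T = {i, i + 1} := by
  obtain ⟨hself, hsucc, hpred⟩ := mem_runStarts.1 hi
  refine Subset.antisymm (fun j hj => ?_) (by simp [insert_subset_iff, hself, hsucc])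
  rcases hT i hself j hj with rfl | rfl | rfl
  · exact absurd hj hpred
  · exact mem_insert_self _ _
  · exact mem_insert_of_mem (mem_singleton_self _)

theorem card_runStarts_le_one (hT : PairwiseAdjacent T) : #(runStarts T) ≤ 1 := by
  refine card_le_one.2 fun i hi j hj => ?_
  have hmem : j ∈ ({i, i + 1} : Finset ι) := hT.eq_pair hi ▸ (mem_runStarts.1 hj).1
  rcases mem_insert.1 hmem with rfl | hsucc
  · rfl
  · rw [mem_singleton.1 hsucc] at hj
    exact absurd hj (add_one_notMem_runStarts (mem_runStarts.1 hi).1)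

variable [NeZero (1 : ι)]

theorem card_eq_two (hT : PairwiseAdjacent T) (h : (runStarts T).Nonempty) : #T = 2 := by
  obtain ⟨i, hi⟩ := h
  rw [hT.eq_pair hi]
  exact card_pair (left_ne_add.2 one_ne_zero)

theorem card_symmDiff_runStarts_le (hS : PairwiseAdjacent S) (hT : PairwiseAdjacent T) :
    #(symmDiff (runStarts S) (runStarts T)) ≤ #(symmDiff S T) := by
  rcases eq_or_ne S T with rfl | hne
  · simp
  have hpos : 0 < #(symmDiff S T) := card_pos.2 (symmDiff_nonempty.2 hne)
  rcases (runStarts S).eq_empty_or_nonempty with hS₀ | hS₁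
  · rw [hS₀, ← bot_eq_empty, bot_symmDiff]
    exact hT.card_runStarts_le_one.trans hpos
  rcases (runStarts T).eq_empty_or_nonempty with hT₀ | hT₁
  · rw [hT₀, ← bot_eq_empty, symmDiff_bot]
    exact hS.card_runStarts_le_one.trans hpos
  have hsdiff : #(S \ T) = #(T \ S) :=
    card_sdiff_comm ((hS.card_eq_two hS₁).trans (hT.card_eq_two hT₁).symm)
  have hsplit : #(symmDiff S T) = #(S \ T) + #(T \ S) :=
    card_union_of_disjoint disjoint_sdiff_sdiff
  calc #(symmDiff (runStarts S) (runStarts T))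
      ≤ #(runStarts S) + #(runStarts T) :=
        (card_le_card symmDiff_subset_union).trans (card_union_le _ _)
    _ ≤ 2 := Nat.add_le_add hS.card_runStarts_le_one hT.card_runStarts_le_one
    _ ≤ #(symmDiff S T) := by lia

theorem card_symmDiff_runStarts_add_le (hS : PairwiseAdjacent S) (hT : PairwiseAdjacent T) :
    #(symmDiff (runStarts S) (runStarts T)) + (if S.Nonempty ↔ T.Nonempty then 0 else 1) ≤
      #(symmDiff S T) := by
  have hle := hS.card_symmDiff_runStarts_le hT
  rcases S.eq_empty_or_nonempty with rfl | hS₁ <;> rcases T.eq_empty_or_nonempty with rfl | hT₁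
  · simp
  · rw [runStarts_empty, ← bot_eq_empty, bot_symmDiff, bot_symmDiff]
    simpa [hT₁] using card_runStarts_lt hT₁
  · rw [runStarts_empty, ← bot_eq_empty, symmDiff_bot, symmDiff_bot]
    simpa [hS₁] using card_runStarts_lt hS₁
  · simpa [hS₁, hT₁] using hle

end PairwiseAdjacent

end CyclicIndices

section Cuts

open Finset

variable {V ι : Type*} [DecidableEq V] [Fintype ι]

/-- The indices of the members of the family `C` that contain `v`. -/
def memIndices (C : ι → Finset V) (v : V) : Finset ι :=
  {i | v ∈ C i}

theorem mem_memIndices {C : ι → Finset V} {v : V} {i : ι} : i ∈ memIndices C v ↔ v ∈ C i := by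
  simp [memIndices]

theorem memIndices_nonempty {C : ι → Finset V} {v : V} :
    (memIndices C v).Nonempty ↔ v ∈ univ.biUnion C := by
  simp [Finset.Nonempty, mem_memIndices]

section Weights

variable [Fintype V] {x : V → V → ℝ}

theorem cutVal_eq_sum_ite (x : V → V → ℝ) (S : Finset V) :
    cutVal x S = ∑ u, ∑ v, if u ∈ S ∧ v ∉ S then x u v else 0 := by
  simp [cutVal, ite_and, sum_ite_mem, ← mem_compl]

theorem two_mul_cutVal (hsymm : ∀ u v, x u v = x v u) (S : Finset V) :
    2 * cutVal x S = ∑ u, ∑ v, x u v * if u ∈ S ↔ v ∈ S then 0 else 1 := by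
  have hswap : cutVal x S = ∑ u, ∑ v, if v ∈ S ∧ u ∉ S then x u v else 0 := by
    rw [cutVal_eq_sum_ite, sum_comm]
    simp_rw [hsymm]
  rw [two_mul]
  nth_rw 1 [cutVal_eq_sum_ite]
  rw [hswap]
  simp_rw [← sum_add_distrib]
  refine sum_congr rfl fun u _ => sum_congr rfl fun v _ => ?_
  by_cases hu : u ∈ S <;> by_cases hv : v ∈ S <;> simp [hu, hv]

theorem two_mul_sum_cutVal [DecidableEq ι] (hsymm : ∀ u v, x u v = x v u) (C : ι → Finset V) :
    2 * ∑ i, cutVal x (C i) =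
      ∑ u, ∑ v, x u v * #(symmDiff (memIndices C u) (memIndices C v)) := by
  have hcard (u v : V) : (#(symmDiff (memIndices C u) (memIndices C v)) : ℝ) =
      ∑ i, if u ∈ C i ↔ v ∈ C i then 0 else 1 := by
    have hfilter : symmDiff (memIndices C u) (memIndices C v) =
        ({i | ¬(u ∈ C i ↔ v ∈ C i)} : Finset ι) := by
      ext i
      simp only [mem_symmDiff, mem_memIndices, mem_filter, mem_univ, true_and]
      tauto
    simp [hfilter, card_filter, ite_not]
  simp_rw [hcard, mul_sum, two_mul_cutVal hsymm]
  rw [sum_comm]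
  exact sum_congr rfl fun u _ => sum_comm

end Weights

variable [AddGroupWithOne ι] {C : ι → Finset V}

/-- The part of `C i ∩ C (i + 1)` outside `C (i - 1)`. In a `k`-cycle with `4 ≤ k` it is all of
`C i ∩ C (i + 1)`; for `k = 3` the common intersection of the three sets is left out. -/
def consecutiveInter (C : ι → Finset V) (i : ι) : Finset V :=
  (C i ∩ C (i + 1)) \ C (i - 1)

theorem memIndices_consecutiveInter [DecidableEq ι] (C : ι → Finset V) (v : V) :
    memIndices (consecutiveInter C) v = runStarts (memIndices C v) := by
  ext i
  simp [mem_runStarts, mem_memIndices, consecutiveInter, and_assoc]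

theorem pairwiseAdjacent_memIndices
    (hdisj : ∀ i j, j ≠ i - 1 → j ≠ i → j ≠ i + 1 → C i ∩ C j = ∅) (v : V) :
    PairwiseAdjacent (memIndices C v) := by
  intro i hi j hj
  by_contra! hfar
  have hv : v ∈ C i ∩ C j := mem_inter.2 ⟨mem_memIndices.1 hi, mem_memIndices.1 hj⟩
  simp [hdisj i j hfar.1 hfar.2.1 hfar.2.2] at hv

variable [Fintype V] [NeZero (1 : ι)] {x : V → V → ℝ}

theorem sum_cutVal_consecutiveInter_add_cutVal_biUnion_le
    (hsymm : ∀ u v, x u v = x v u) (hnonneg : ∀ u v, 0 ≤ x u v)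
    (hadj : ∀ v, PairwiseAdjacent (memIndices C v)) :
    ∑ i, cutVal x (consecutiveInter C i) + cutVal x (univ.biUnion C) ≤ ∑ i, cutVal x (C i) := by
  classical
  refine le_of_mul_le_mul_left ?_ (two_pos : (0 : ℝ) < 2)
  rw [mul_add, two_mul_sum_cutVal hsymm, two_mul_sum_cutVal hsymm, two_mul_cutVal hsymm]
  simp_rw [← sum_add_distrib, ← mul_add, memIndices_consecutiveInter, ← memIndices_nonempty]
  refine sum_le_sum fun u _ => sum_le_sum fun v _ => mul_le_mul_of_nonneg_left ?_ (hnonneg u v)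
  exact_mod_cast (hadj u).card_symmDiff_runStarts_add_le (hadj v)

theorem two_le_card_mul_of_cutVal_le
    (hsymm : ∀ u v, x u v = x v u) (hnonneg : ∀ u v, 0 ≤ x u v)
    (h2ec : ∀ S : Finset V, S.Nonempty → S ≠ univ → 2 ≤ cutVal x S)
    (hadj : ∀ v, PairwiseAdjacent (memIndices C v))
    (hinter : ∀ i, (consecutiveInter C i).Nonempty) (hunion : univ.biUnion C ≠ univ)
    {η : ℝ} (hcut : ∀ i, cutVal x (C i) ≤ 2 + η) :
    2 ≤ Fintype.card ι * η := by
  have hsub (i : ι) : consecutiveInter C i ⊆ univ.biUnion C :=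
    (sdiff_subset.trans inter_subset_left).trans (subset_biUnion_of_mem C (mem_univ i))
  have hI (i : ι) : 2 ≤ cutVal x (consecutiveInter C i) :=
    h2ec _ (hinter i) fun h => hunion (univ_subset_iff.1 (h ▸ hsub i))
  have hU : 2 ≤ cutVal x (univ.biUnion C) := h2ec _ ((hinter 0).mono (hsub 0)) hunion
  have hlower : Fintype.card ι * 2 ≤ ∑ i, cutVal x (consecutiveInter C i) := by
    simpa using card_nsmul_le_sum univ _ (2 : ℝ) fun i _ => hI i
  have hupper : ∑ i, cutVal x (C i) ≤ Fintype.card ι * (2 + η) := by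
    simpa [mul_add] using sum_le_card_nsmul univ _ (2 + η) fun i _ => hcut i
  linarith [sum_cutVal_consecutiveInter_add_cutVal_biUnion_le hsymm hnonneg hadj]

end Cuts

theorem natCast_zmod_ne_zero {k n : ℕ} (hn : 0 < n) (hnk : n < k) : (n : ZMod k) ≠ 0 := by
  rw [Ne, ZMod.natCast_eq_zero_iff]
  exact Nat.not_dvd_of_pos_of_lt hn hnk

theorem sub_one_inter_add_one_eq_empty {V : Type*} [DecidableEq V] {k : ℕ} (hk : 4 ≤ k)
    {C : ZMod k → Finset V}
    (hdisj : ∀ i j, j ≠ i - 1 → j ≠ i → j ≠ i + 1 → C i ∩ C j = ∅) (i : ZMod k) :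
    C (i - 1) ∩ C (i + 1) = ∅ := by
  have hone := natCast_zmod_ne_zero (k := k) (n := 1) (by lia) (by lia)
  have htwo := natCast_zmod_ne_zero (k := k) (n := 2) (by lia) (by lia)
  have hthree := natCast_zmod_ne_zero (k := k) (n := 3) (by lia) (by lia)
  push_cast at hone htwo hthree
  exact hdisj _ _ (fun h => hthree (by linear_combination h))
    (fun h => htwo (by linear_combination h)) (fun h => hone (by linear_combination h))

theorem consecutiveInter_nonempty {V : Type*} [DecidableEq V] {k : ℕ} (hk : 3 ≤ k)
    {C : ZMod k → Finset V} (hmeet : ∀ i, (C i ∩ C (i + 1)).Nonempty)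
    (hdisj : ∀ i j, j ≠ i - 1 → j ≠ i → j ≠ i + 1 → C i ∩ C j = ∅)
    (h3 : k = 3 → ∀ i, ¬ C i ∩ C (i + 1) ⊆ C (i - 1)) (i : ZMod k) :
    (consecutiveInter C i).Nonempty := by
  refine Finset.sdiff_nonempty.2 ?_
  rcases hk.eq_or_lt with hk' | hk'
  · exact h3 hk'.symm i
  · obtain ⟨v, hv⟩ := hmeet i
    intro hsub
    have hv' : v ∈ C (i - 1) ∩ C (i + 1) :=
      Finset.mem_inter.2 ⟨hsub hv, (Finset.mem_inter.1 hv).2⟩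
    simp [sub_one_inter_add_one_eq_empty hk' hdisj i] at hv'

/-- Any `k`-cycle `C₁, …, C_k` formed by `η`-near min cuts of a fractionally
2-edge-connected weighted graph satisfies `k ≥ 2/η`. Indices are taken mod `k`. -/
theorem stmt_8 {V : Type*} [Fintype V] [DecidableEq V]
    (x : V → V → ℝ)
    (hsymm : ∀ u v, x u v = x v u)
    (hnonneg : ∀ u v, 0 ≤ x u v)
    (hdiag : ∀ v, x v v = 0)
    (h2ec : ∀ S : Finset V, S.Nonempty → S ≠ Finset.univ → 2 ≤ cutVal x S)
    (η : ℝ) (hη : 0 < η)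
    (k : ℕ) (hk : 3 ≤ k) (C : ZMod k → Finset V)
    (hNMC : ∀ i, (C i).Nonempty ∧ C i ≠ Finset.univ ∧ cutVal x (C i) < 2 + η)
    (hcross : ∀ i, CutCrosses (C i) (C (i - 1)) ∧ CutCrosses (C i) (C (i + 1)))
    (hdisj : ∀ i j : ZMod k, j ≠ i - 1 → j ≠ i → j ≠ i + 1 → C i ∩ C j = ∅)
    (hunion : (⋃ i, (C i : Set V)) ≠ (Set.univ : Set V))
    (h3 : k = 3 → ∀ i, ¬ C i ∩ C (i + 1) ⊆ C (i - 1)) :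
    2 / η ≤ (k : ℝ) := by
  have : NeZero k := ⟨by lia⟩
  have : Fact (1 < k) := ⟨by lia⟩
  have hproper : Finset.univ.biUnion C ≠ Finset.univ := fun h => hunion <| by
    simpa using congrArg (fun S : Finset V => (S : Set V)) h
  have hinter (i : ZMod k) : (consecutiveInter C i).Nonempty :=
    consecutiveInter_nonempty hk (fun j => (hcross j).2.1) hdisj h3 i
  have hcount : 2 ≤ Fintype.card (ZMod k) * η :=
    two_le_card_mul_of_cutVal_le hsymm hnonneg h2ec (pairwiseAdjacent_memIndices hdisj) hinter
      hproper fun i => (hNMC i).2.2.le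
  rwa [div_le_iff₀ hη, ← ZMod.card k]
end

section
/- Let V be a finite set, let N be a family of cuts of V, and let C and C′ be two distinct connected components of N under the crossing relation. Then there exist an atom a of C and an atom a′ of C′ such that a ∪ a′ = V. -/
open scoped Classical

/-- The crossing relation restricted to the family `N`. -/
def crossRel {V : Type*} [Fintype V] [DecidableEq V] (N : Set (Finset V))
    (A B : Finset V) : Prop :=
  A ∈ N ∧ B ∈ N ∧ CutCrosses A B

/-- `C` is a connected component of the family `N` under the crossing relation:
it is an equivalence class of `N` under the reflexive–transitive closure of the
crossing relation restricted to `N`. -/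
def IsCutComponent {V : Type*} [Fintype V] [DecidableEq V] (N : Set (Finset V))
    (C : Set (Finset V)) : Prop :=
  ∃ S₀ ∈ N, C = {S | S ∈ N ∧ Relation.ReflTransGen (crossRel N) S₀ S}

/-- The atom of the component `C` containing `u`: all vertices that lie in exactly the
same cuts of `C` as `u` does. -/
noncomputable def atomOf {V : Type*} [Fintype V] [DecidableEq V]
    (C : Set (Finset V)) (u : V) : Finset V :=
  Finset.univ.filter (fun v => ∀ S ∈ C, (v ∈ S ↔ u ∈ S))

/-- `a` is an atom of the component `C`. -/
def IsAtomOf {V : Type*} [Fintype V] [DecidableEq V]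
    (C : Set (Finset V)) (a : Finset V) : Prop :=
  ∃ u : V, a = atomOf C u

/-!
Call `T` *split* by `S` if `T` meets both `S` and its complement, so that `S` and `T` cross iff `S`
splits both `T` and `Tᶜ`. The key fact: if `S` and `S'` cross, `S` does not split `X`, and `S'` does
not split `Y`, then `X` lies on one side of `S` and `Y` on one side of `S'`, so `X ∪ Y` misses the
nonempty corner cut out by the two other sides.

Let `T` belong to `C'`, so that `T` crosses no member of `C`. The key fact with `{X, Y} = {T, Tᶜ}`,
applied along the crossings of `C`, shows that all members of `C` leave the same side of `T`
unsplit. This side then lies in an atom `a` of `C`; equivalently, `T` does not split `aᶜ`. If `T'`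
crosses `T` and does not split `bᶜ` for an atom `b` of `C`, then `aᶜ ∪ bᶜ ≠ V`, so `a` and `b` meet
and are equal. Thus the same `a` serves all of `C'`, and since no member of `C'` splits `aᶜ`, this
set lies in an atom of `C'`.
-/

section Crossing

variable {V : Type*} {S S' T X Y : Set V}

/-- `S` splits `X` if `X` meets both `S` and its complement. Both are arbitrary sets, so that the
condition also applies to sides of cuts and to complements of atoms. -/
def SetSplits (S X : Set V) : Prop :=
  (X ∩ S).Nonempty ∧ (X \ S).Nonempty

/-- The crossing relation `CutCrosses` for subsets of a type that need not be finite. -/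
def SetCrosses (S T : Set V) : Prop :=
  (S ∩ T).Nonempty ∧ (S \ T).Nonempty ∧ (T \ S).Nonempty ∧ ((S ∪ T)ᶜ).Nonempty

theorem SetCrosses.symm (h : SetCrosses S T) : SetCrosses T S := by
  obtain ⟨hinter, hleft, hright, hcompl⟩ := h
  exact ⟨by rwa [Set.inter_comm], hright, hleft, by rwa [Set.union_comm]⟩

theorem setCrosses_iff_setSplits : SetCrosses S T ↔ SetSplits S T ∧ SetSplits S Tᶜ := by
  have hdiff : Tᶜ ∩ S = S \ T := by rw [Set.inter_comm, Set.sdiff_eq]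
  have hcompl : Tᶜ \ S = (S ∪ T)ᶜ := by rw [Set.sdiff_eq, Set.compl_union, Set.inter_comm]
  rw [SetCrosses, SetSplits, SetSplits, Set.inter_comm S T, hdiff, hcompl]
  tauto

theorem not_setSplits_iff : ¬ SetSplits S X ↔ X ⊆ Sᶜ ∨ X ⊆ S := by
  rw [SetSplits, not_and_or, Set.not_nonempty_iff_eq_empty, Set.not_nonempty_iff_eq_empty,
    ← Set.disjoint_iff_inter_eq_empty, Set.sdiff_eq_empty, Set.subset_compl_iff_disjoint_right]

theorem not_setSplits_compl_iff : ¬ SetSplits S Xᶜ ↔ S ⊆ X ∨ Sᶜ ⊆ X := by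
  rw [not_setSplits_iff, Set.compl_subset_compl, Set.compl_subset_comm]

theorem SetCrosses.union_ne_univ_of_not_setSplits (h : SetCrosses S S') (hX : ¬ SetSplits S X)
    (hY : ¬ SetSplits S' Y) : X ∪ Y ≠ Set.univ := by
  obtain ⟨⟨a, haS, haS'⟩, ⟨b, hbS, hbS'⟩, ⟨c, hcS', hcS⟩, ⟨d, hd⟩⟩ := h
  rw [Set.mem_compl_iff, Set.mem_union, not_or] at hd
  rw [Set.ne_univ_iff_exists_notMem]
  simp only [Set.mem_union, not_or]
  rcases not_setSplits_iff.1 hX with hX | hX <;> rcases not_setSplits_iff.1 hY with hY | hY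
  · exact ⟨a, fun ha => hX ha haS, fun ha => hY ha haS'⟩
  · exact ⟨b, fun hb => hX hb hbS, fun hb => hbS' (hY hb)⟩
  · exact ⟨c, fun hc => hcS (hX hc), fun hc => hY hc hcS'⟩
  · exact ⟨d, fun hdX => hd.1 (hX hdX), fun hdY => hd.2 (hY hdY)⟩

theorem SetCrosses.setSplits_of_not_setCrosses (h : SetCrosses S S') (hS : ¬ SetCrosses S T)
    (hsplit : SetSplits S T) : SetSplits S' T := by
  have hcompl : ¬ SetSplits S Tᶜ := fun hc => hS (setCrosses_iff_setSplits.2 ⟨hsplit, hc⟩)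
  by_contra hT
  exact h.union_ne_univ_of_not_setSplits hcompl hT (Set.compl_union_self T)

end Crossing

section CrossConnected

variable {V ι : Type*} {S : ι → Set V}

/-- A family of sets is cross-connected if any two members are joined by a chain of crossings
within the family. The empty family is allowed. -/
def CrossConnected (S : ι → Set V) : Prop :=
  ∀ i j, Relation.ReflTransGen (fun k l => SetCrosses (S k) (S l)) i j

/-- The atom of the family `S` containing `u`, for subsets of a type that need not be finite;
compare `atomOf`. -/
def familyAtom (S : ι → Set V) (u : V) : Set V :=
  {v | ∀ i, v ∈ S i ↔ u ∈ S i}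

theorem CrossConnected.forall_of_exists (hS : CrossConnected S) {p : ι → Prop}
    (hp : ∀ i j, SetCrosses (S i) (S j) → p i → p j) (h : ∃ i, p i) : ∀ i, p i := by
  obtain ⟨i, hi⟩ := h
  intro j
  induction hS i j with
  | refl => exact hi
  | tail _ hcross ih => exact hp _ _ hcross ih

theorem familyAtom_eq_of_mem {u v : V} (h : v ∈ familyAtom S u) :
    familyAtom S v = familyAtom S u :=
  Set.ext fun _ => forall_congr' fun i => by rw [h i]

theorem familyAtom_eq_of_inter_nonempty {u v : V}
    (h : (familyAtom S u ∩ familyAtom S v).Nonempty) : familyAtom S u = familyAtom S v := by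
  obtain ⟨w, hu, hv⟩ := h
  rw [← familyAtom_eq_of_mem hu, familyAtom_eq_of_mem hv]

theorem exists_subset_familyAtom [Nonempty V] {X : Set V} (h : ∀ i, ¬ SetSplits (S i) X) :
    ∃ u, X ⊆ familyAtom S u := by
  obtain rfl | ⟨u, hu⟩ := X.eq_empty_or_nonempty
  · exact ⟨Classical.arbitrary V, Set.empty_subset _⟩
  · refine ⟨u, fun v hv i => ?_⟩
    rcases not_setSplits_iff.1 (h i) with hX | hX
    · exact iff_of_false (hX hv) (hX hu)
    · exact iff_of_true (hX hv) (hX hu)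

theorem CrossConnected.exists_not_setSplits_compl_familyAtom [Nonempty V]
    (hS : CrossConnected S) {T : Set V} (hT : ∀ i, ¬ SetCrosses (S i) T) :
    ∃ u, ¬ SetSplits T (familyAtom S u)ᶜ := by
  simp only [not_setSplits_compl_iff]
  by_cases hsplit : ∃ i, SetSplits (S i) T
  · have hall : ∀ i, SetSplits (S i) T :=
      hS.forall_of_exists (fun i _ hij => hij.setSplits_of_not_setCrosses (hT i)) hsplit
    obtain ⟨u, hu⟩ := exists_subset_familyAtom (S := S) (X := Tᶜ)
      fun i hi => hT i (setCrosses_iff_setSplits.2 ⟨hall i, hi⟩)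
    exact ⟨u, .inr hu⟩
  · obtain ⟨u, hu⟩ := exists_subset_familyAtom (not_exists.1 hsplit)
    exact ⟨u, .inl hu⟩

theorem SetCrosses.familyAtom_eq {T T' : Set V} (h : SetCrosses T T') {u v : V}
    (hu : ¬ SetSplits T (familyAtom S u)ᶜ) (hv : ¬ SetSplits T' (familyAtom S v)ᶜ) :
    familyAtom S u = familyAtom S v := by
  apply familyAtom_eq_of_inter_nonempty
  rw [← Set.compl_ne_univ, Set.compl_inter]
  exact h.union_ne_univ_of_not_setSplits hu hv

end CrossConnected

section CutComponent

variable {V : Type*} [Fintype V] [DecidableEq V] {N C C' : Set (Finset V)}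

theorem setCrosses_coe {A B : Finset V} : SetCrosses (A : Set V) B ↔ CutCrosses A B := by
  simp only [SetCrosses, CutCrosses, ← Finset.coe_inter, ← Finset.coe_sdiff, ← Finset.coe_union,
    ← Finset.coe_compl, Finset.coe_nonempty]

theorem coe_atomOf (C : Set (Finset V)) (u : V) :
    (atomOf C u : Set V) = familyAtom (fun A : C => (A.1 : Set V)) u := by
  ext v
  simp [atomOf, familyAtom]

theorem reflTransGen_crossRel_symm {A B : Finset V}
    (h : Relation.ReflTransGen (crossRel N) A B) : Relation.ReflTransGen (crossRel N) B A := by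
  have : Std.Symm (crossRel N) :=
    ⟨fun _ _ h => ⟨h.2.1, h.1, setCrosses_coe.1 (setCrosses_coe.2 h.2.2).symm⟩⟩
  exact Std.Symm.symm _ _ h

theorem IsCutComponent.mem_iff (hC : IsCutComponent N C) {A B : Finset V} (hA : A ∈ C) :
    B ∈ C ↔ B ∈ N ∧ Relation.ReflTransGen (crossRel N) A B := by
  obtain ⟨S₀, -, rfl⟩ := hC
  exact and_congr_right fun _ => ⟨(reflTransGen_crossRel_symm hA.2).trans, hA.2.trans⟩

theorem IsCutComponent.crossConnected (hC : IsCutComponent N C) :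
    CrossConnected (fun A : C => (A.1 : Set V)) := by
  rintro ⟨A, hA⟩ ⟨B, hB⟩
  induction ((hC.mem_iff hA).1 hB).2 with
  | refl => exact .refl
  | tail hchain hcross ih =>
    have hmem := (hC.mem_iff hA).2 ⟨hcross.1, hchain⟩
    exact (ih hmem).tail (setCrosses_coe.2 hcross.2.2)

theorem IsCutComponent.eq_of_cutCrosses (hC : IsCutComponent N C) (hC' : IsCutComponent N C')
    {A B : Finset V} (hA : A ∈ C) (hB : B ∈ C') (h : CutCrosses A B) : C = C' := by
  have hAN := ((hC.mem_iff hA).1 hA).1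
  have hBN := ((hC'.mem_iff hB).1 hB).1
  have hBC : B ∈ C := (hC.mem_iff hA).2 ⟨hBN, .single ⟨hAN, hBN, h⟩⟩
  ext D
  rw [hC.mem_iff hBC, hC'.mem_iff hB]

end CutComponent

theorem stmt_9_general {V ι ι' : Type*} [Nonempty V] {S : ι → Set V} {S' : ι' → Set V}
    (hS : CrossConnected S) (hS' : CrossConnected S') (h : ∀ i j, ¬ SetCrosses (S i) (S' j)) :
    ∃ u v, familyAtom S u ∪ familyAtom S' v = Set.univ := by
  have hside : ∀ j, ∃ u, ¬ SetSplits (S' j) (familyAtom S u)ᶜ := fun j =>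
    hS.exists_not_setSplits_compl_familyAtom (h · j)
  obtain ⟨u, hu⟩ : ∃ u, ∀ j, ¬ SetSplits (S' j) (familyAtom S u)ᶜ := by
    obtain _ | ⟨⟨j₀⟩⟩ := isEmpty_or_nonempty ι'
    · exact ⟨Classical.arbitrary V, isEmptyElim⟩
    · obtain ⟨u, hu⟩ := hside j₀
      refine ⟨u, hS'.forall_of_exists (fun j k hjk hj => ?_) ⟨j₀, hu⟩⟩
      obtain ⟨v, hv⟩ := hside k
      rwa [hjk.familyAtom_eq hj hv]
  obtain ⟨v, hv⟩ := exists_subset_familyAtom hu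
  exact ⟨u, v, Set.compl_subset_iff_union.1 hv⟩

/-- If `C` and `C'` are two distinct connected components of a family `N` of cuts of a
finite set `V`, then there exist an atom `a` of `C` and an atom `a'` of `C'` with
`a ∪ a' = V`. -/
theorem stmt_9 {V : Type*} [Fintype V] [DecidableEq V]
    (N : Set (Finset V)) (hN : ∀ S ∈ N, S.Nonempty ∧ S ≠ Finset.univ)
    (C C' : Set (Finset V))
    (hC : IsCutComponent N C) (hC' : IsCutComponent N C')
    (hne : C ≠ C') :
    ∃ a a' : Finset V, IsAtomOf C a ∧ IsAtomOf C' a' ∧ a ∪ a' = Finset.univ := by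
  have ⟨S₀, hS₀, _⟩ := hC
  have : Nonempty V := (hN S₀ hS₀).1.to_type
  obtain ⟨u, v, huv⟩ := stmt_9_general hC.crossConnected hC'.crossConnected
    fun A B hAB => hne (hC.eq_of_cutCrosses hC' A.2 B.2 (setCrosses_coe.1 hAB))
  exact ⟨_, _, ⟨u, rfl⟩, ⟨v, rfl⟩, by simpa [← coe_atomOf, ← Finset.coe_union] using huv⟩
end

section
/- Let x be a fractionally 2-edge-connected weighted graph on a finite set V and let η ≥ 0. Let N be the family of all η-near min cuts of x, and let C be a connected component of N under the crossing relation. Suppose B is an η-near min cut of x that is a union of atoms of C, containing at least 2 atoms of C and at most |A(C)| − 2 atoms of C, where A(C) is the set of all atoms of C. Then B ∈ C. -/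
open scoped BigOperators Classical

/-!
A cut crosses `B` exactly when it separates points on both sides of `B`. If `B` and `Bᶜ` each meet
two atoms of `C`, some cut of `C` separates `B` and some cut of `C` separates `Bᶜ`. Walk from the
first to the second along crossings: crossing out of a cut that does not separate `Bᶜ` leads to a
cut that again separates `B`. Hence some cut on the walk separates both sides, that is, it
crosses `B`.
-/

/-- The cut `S` separates two points of `D`. Asking this for `D` and for `Dᶜ` expresses that `S`
crosses `D`, see `cutCrosses_iff_separates`. -/
def Separates {V : Type*} (S D : Finset V) : Prop :=
  ∃ u ∈ D, ∃ v ∈ D, u ∈ S ∧ v ∉ S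

lemma Separates.mono {V : Type*} {S D E : Finset V} (h : Separates S D) (hDE : D ⊆ E) :
    Separates S E := by
  obtain ⟨u, hu, v, hv, huv⟩ := h
  exact ⟨u, hDE hu, v, hDE hv, huv⟩

section

variable {V : Type*} [Fintype V] [DecidableEq V] {N C : Set (Finset V)} {S T A B D : Finset V}

lemma subset_or_subset_compl_of_not_separates (h : ¬ Separates S D) : D ⊆ S ∨ D ⊆ Sᶜ := by
  by_contra! hD
  obtain ⟨⟨v, hvD, hvS⟩, ⟨u, huD, huS⟩⟩ := hD.imp Finset.not_subset.1 Finset.not_subset.1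
  exact h ⟨u, huD, v, hvD, by simpa using huS, hvS⟩

lemma cutCrosses_iff_separates : CutCrosses A B ↔ Separates A B ∧ Separates A Bᶜ := by
  simp only [CutCrosses, Separates, Finset.Nonempty, Finset.mem_inter, Finset.mem_sdiff,
    Finset.mem_union, Finset.mem_compl]
  grind

lemma CutCrosses.symm (h : CutCrosses A B) : CutCrosses B A := by
  obtain ⟨hAB, hA, hB, hcompl⟩ := h
  exact ⟨Finset.inter_comm A B ▸ hAB, hB, hA, Finset.union_comm A B ▸ hcompl⟩

lemma CutCrosses.separates_or_separates_compl (h : CutCrosses S T) (D : Finset V) :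
    Separates T D ∨ Separates S Dᶜ := by
  obtain ⟨hTS, hTSc⟩ := cutCrosses_iff_separates.1 h.symm
  by_contra! hnot
  rcases subset_or_subset_compl_of_not_separates hnot.2 with hDS | hDS
  · exact hnot.1 (hTSc.mono (compl_le_iff_compl_le.1 hDS))
  · exact hnot.1 (hTS.mono (Finset.compl_subset_compl.1 hDS))

lemma exists_cutCrosses_of_reflTransGen (h : Relation.ReflTransGen (crossRel N) S T)
    (hS : Separates S D) (hT : Separates T Dᶜ) :
    ∃ R, Relation.ReflTransGen (crossRel N) S R ∧ CutCrosses R D := by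
  induction h using Relation.ReflTransGen.head_induction_on with
  | refl => exact ⟨T, .refl, cutCrosses_iff_separates.2 ⟨hS, hT⟩⟩
  | @head S S' hSS' _ ih =>
    by_cases hSc : Separates S Dᶜ
    · exact ⟨S, .refl, cutCrosses_iff_separates.2 ⟨hS, hSc⟩⟩
    · have hS' : Separates S' D := (hSS'.2.2.separates_or_separates_compl D).resolve_right hSc
      obtain ⟨R, hS'R, hRD⟩ := ih hS'
      exact ⟨R, hS'R.head hSS', hRD⟩

instance (N : Set (Finset V)) : Std.Symm (crossRel N) where
  symm _ _ := fun ⟨hA, hB, hAB⟩ => ⟨hB, hA, hAB.symm⟩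

namespace IsCutComponent

lemma mem_of_crossRel (hC : IsCutComponent N C) (hS : S ∈ C) (h : crossRel N S T) : T ∈ C := by
  obtain ⟨S₀, -, rfl⟩ := hC
  exact ⟨h.2.1, hS.2.tail h⟩

lemma mem_of_reflTransGen (hC : IsCutComponent N C) (hS : S ∈ C)
    (h : Relation.ReflTransGen (crossRel N) S T) : T ∈ C := by
  induction h with
  | refl => exact hS
  | tail _ hcross ih => exact hC.mem_of_crossRel ih hcross

lemma subset (hC : IsCutComponent N C) : C ⊆ N := by
  obtain ⟨S₀, -, rfl⟩ := hC
  exact fun S hS => hS.1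

lemma reflTransGen (hC : IsCutComponent N C) (hS : S ∈ C) (hT : T ∈ C) :
    Relation.ReflTransGen (crossRel N) S T := by
  obtain ⟨S₀, -, rfl⟩ := hC
  exact (symm hS.2).trans hT.2

end IsCutComponent

lemma atomOf_eq_atomOf_iff {u v : V} :
    atomOf C u = atomOf C v ↔ ∀ S ∈ C, (u ∈ S ↔ v ∈ S) := by
  constructor
  · intro h
    have hu : u ∈ atomOf C v := h ▸ by simp [atomOf]
    simpa [atomOf] using hu
  · intro h
    ext w
    simp only [atomOf, Finset.mem_filter, Finset.mem_univ, true_and]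
    exact forall₂_congr fun S hS => by rw [h S hS]

lemma two_le_card_image_atomOf_iff :
    2 ≤ (D.image (atomOf C)).card ↔ ∃ S ∈ C, Separates S D := by
  rw [Nat.succ_le_iff, Finset.one_lt_card]
  simp only [Finset.exists_mem_image, ne_eq, atomOf_eq_atomOf_iff, not_forall]
  constructor
  · rintro ⟨u, hu, v, hv, S, hS, huv⟩
    by_cases huS : u ∈ S
    · exact ⟨S, hS, u, hu, v, hv, huS, fun hvS => huv (iff_of_true huS hvS)⟩
    · exact ⟨S, hS, v, hv, u, hu, by_contra fun hvS => huv (iff_of_false huS hvS), huS⟩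
  · rintro ⟨S, hS, u, hu, v, hv, huS, hvS⟩
    exact ⟨u, hu, v, hv, S, hS, fun huv => hvS (huv.1 huS)⟩

lemma card_image_univ_le_add_card_image_compl {β : Type*} [DecidableEq β] (f : V → β)
    (B : Finset V) :
    (Finset.univ.image f).card ≤ (B.image f).card + (Bᶜ.image f).card := by
  rw [← Finset.union_compl B, Finset.image_union]
  exact Finset.card_union_le _ _

theorem stmt_10_general (hC : IsCutComponent N C) (hBN : B ∈ N)
    (hB : 2 ≤ (B.image (atomOf C)).card) (hBcompl : 2 ≤ (Bᶜ.image (atomOf C)).card) :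
    B ∈ C := by
  obtain ⟨S, hS, hSB⟩ := two_le_card_image_atomOf_iff.1 hB
  obtain ⟨T, hT, hTB⟩ := two_le_card_image_atomOf_iff.1 hBcompl
  obtain ⟨R, hSR, hRB⟩ := exists_cutCrosses_of_reflTransGen (hC.reflTransGen hS hT) hSB hTB
  have hR : R ∈ C := hC.mem_of_reflTransGen hS hSR
  exact hC.mem_of_crossRel hR ⟨hC.subset hR, hBN, hRB⟩

end

/-- Let `N` be the family of all `η`-near min cuts of a fractionally 2-edge-connected
weighted graph and `C` a connected component of `N`. If `B` is an `η`-near min cut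
that is a union of atoms of `C`, containing at least `2` and at most `|A(C)| − 2`
of the atoms of `C`, then `B ∈ C`. -/
theorem stmt_10 {V : Type*} [Fintype V] [DecidableEq V]
    (x : V → V → ℝ)
    (hsymm : ∀ u v, x u v = x v u)
    (hnonneg : ∀ u v, 0 ≤ x u v)
    (hdiag : ∀ v, x v v = 0)
    (h2ec : ∀ S : Finset V, S.Nonempty → S ≠ Finset.univ → 2 ≤ cutVal x S)
    (η : ℝ) (hη : 0 ≤ η)
    (N : Set (Finset V))
    (hNdef : N = {S : Finset V | S.Nonempty ∧ S ≠ Finset.univ ∧ cutVal x S < 2 + η})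
    (C : Set (Finset V)) (hC : IsCutComponent N C)
    (B : Finset V)
    (hBne : B.Nonempty) (hBuniv : B ≠ Finset.univ) (hBcut : cutVal x B < 2 + η)
    (hBunionAtoms : ∀ u ∈ B, atomOf C u ⊆ B)
    (hBlower : 2 ≤ (B.image (atomOf C)).card)
    (hBupper : (B.image (atomOf C)).card ≤ (Finset.univ.image (atomOf C)).card - 2) :
    B ∈ C := by
  have hcard := card_image_univ_le_add_card_image_compl (atomOf C) B
  exact stmt_10_general hC (hNdef ▸ ⟨hBne, hBuniv, hBcut⟩) hBlower (by omega)
end
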